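/- There exists an EnrichedCategory 𝒵 Bool structure whose associated integer-valued hom function d satisfies d false false = 0, d true true = 0, d false true = 1 and d true false = -1. In particular, there is a 𝒵-enriched category structure on a two-element type all of whose hom-values lie in {-1, 0, 1} but whose hom-values are not all zero. (This is the paper's explicit witness, in Remark 3.3, of an object lying in the equalizer of Enr(f) and Enr(g) but not in the image of Enr(e).) -/

import Mathlib

open CategoryTheory MonoidalCategory

/-- The discrete monoidal category on the monoid `Multiplicative ℤ`. -/
abbrev 𝒵 : Type := CategoryTheory.Discrete (Multiplicative ℤ)

/-!
Any function `v : X → G` to a group, thought of as a potential, has differences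
`d x y = (v x)⁻¹ * v y` with `d x x = 1` and `d x y * d y z = d x z`. These are exactly the data of
an enrichment of `X` in the discrete monoidal category on `G`, the coherence laws being automatic
because there are no distinct parallel morphisms. The potential on `Bool` with values `0` and `1`
in `ℤ` has the differences `0`, `1` and `-1`.
-/

/-- The category enriched in the discrete monoidal category on a monoid `M` whose hom-objects are
given by a function `d : X → X → M`. The order of the factors in `d_mul` is that of the
composition morphisms `Hom x y ⊗ Hom y z ⟶ Hom x z`. -/
abbrev enrichedCategoryOfCocycle {M X : Type*} [Monoid M] (d : X → X → M)
    (d_self : ∀ x, d x x = 1) (d_mul : ∀ x y z, d x y * d y z = d x z) :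
    EnrichedCategory (Discrete M) X where
  Hom x y := Discrete.mk (d x y)
  id x := Discrete.eqToHom (d_self x).symm
  comp x y z := Discrete.eqToHom (d_mul x y z)
  id_comp _ _ := Subsingleton.elim _ _
  comp_id _ _ := Subsingleton.elim _ _
  assoc _ _ _ _ := Subsingleton.elim _ _

/-- The category enriched in the discrete monoidal category on a group `G` whose hom-objects are
the differences `(v x)⁻¹ * v y` of a potential `v : X → G`. -/
abbrev enrichedCategoryOfPotential {G X : Type*} [Group G] (v : X → G) :
    EnrichedCategory (Discrete G) X :=
  enrichedCategoryOfCocycle (fun x y ↦ (v x)⁻¹ * v y) (fun x ↦ inv_mul_cancel (v x))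
    fun x y z ↦ by rw [mul_assoc, mul_inv_cancel_left]

theorem toAdd_hom_enrichedCategoryOfPotential {A X : Type*} [AddCommGroup A] (v : X → A)
    (x y : X) :
    ((enrichedCategoryOfPotential fun x ↦ Multiplicative.ofAdd (v x)).Hom x y).as.toAdd =
      v y - v x :=
  neg_add_eq_sub (v x) (v y)

/-- There is a `𝒵`-enriched category structure on `Bool` whose associated
integer-valued hom function `d` satisfies `d false false = 0`, `d true true = 0`,
`d false true = 1` and `d true false = -1`. -/
theorem exists_enrichedCategory_bool :
    ∃ inst : EnrichedCategory 𝒵 Bool,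
      Multiplicative.toAdd (@EnrichedCategory.Hom 𝒵 _ _ Bool inst false false).as = 0 ∧
      Multiplicative.toAdd (@EnrichedCategory.Hom 𝒵 _ _ Bool inst true true).as = 0 ∧
      Multiplicative.toAdd (@EnrichedCategory.Hom 𝒵 _ _ Bool inst false true).as = 1 ∧
      Multiplicative.toAdd (@EnrichedCategory.Hom 𝒵 _ _ Bool inst true false).as = -1 := by
  refine ⟨enrichedCategoryOfPotential fun b ↦ Multiplicative.ofAdd b.toInt, ?_, ?_, ?_, ?_⟩ <;>
    rw [toAdd_hom_enrichedCategoryOfPotential] <;> rfl
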